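/- arXiv:2112.04072 — 2 statements merged into one kernel-verified Lean document; each statement's English description precedes it below -/
import Mathlib

section
/- Let G be a finitely generated virtually free group and let φ be a group endomorphism of G. Then φ is class-permuting if and only if the following two conditions hold: (1) for every maximal finite subgroup A of G, the image φ(A) is a maximal finite subgroup of G; (2) for any two maximal finite subgroups A and B of G, φ(A) and φ(B) are conjugate in G if and only if A and B are conjugate in G. -/
open FirstOrder Language

/-- Function symbols of the first-order language of groups:
a binary multiplication, a unary inverse and a constant for the identity. -/
inductive GroupFunc : ℕ → Type
  | mul : GroupFunc 2
  | inv : GroupFunc 1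
  | one : GroupFunc 0

/-- The first-order language of groups. -/
def groupLang : FirstOrder.Language :=
  { Functions := GroupFunc
    Relations := fun _ => Empty }

/-- Every group is a structure for the language of groups in the natural way. -/
instance groupLangStructure (G : Type*) [Group G] : groupLang.Structure G where
  funMap {n} f v :=
    match f with
    | .mul => v 0 * v 1
    | .inv => (v 0)⁻¹
    | .one => 1
  RelMap {n} r _ := r.elim

/-- Existential formulas: iterated existential quantifications of a
quantifier-free formula. -/
inductive IsExistentialQF {α : Type*} : ∀ {n : ℕ}, groupLang.BoundedFormula α n → Prop
  | of_isQF {n : ℕ} {φ : groupLang.BoundedFormula α n} (h : φ.IsQF) : IsExistentialQF φ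
  | ex {n : ℕ} {φ : groupLang.BoundedFormula α (n + 1)} (h : IsExistentialQF φ) :
      IsExistentialQF φ.ex

/-- Universal formulas: iterated universal quantifications of a
quantifier-free formula. -/
inductive IsUniversalQF {α : Type*} : ∀ {n : ℕ}, groupLang.BoundedFormula α n → Prop
  | of_isQF {n : ℕ} {φ : groupLang.BoundedFormula α n} (h : φ.IsQF) : IsUniversalQF φ
  | all {n : ℕ} {φ : groupLang.BoundedFormula α (n + 1)} (h : IsUniversalQF φ) :
      IsUniversalQF φ.all

/-- ∀∃-formulas: iterated universal quantifications of an existential formula. -/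
inductive IsAE {α : Type*} : ∀ {n : ℕ}, groupLang.BoundedFormula α n → Prop
  | of_existential {n : ℕ} {φ : groupLang.BoundedFormula α n} (h : IsExistentialQF φ) : IsAE φ
  | all {n : ℕ} {φ : groupLang.BoundedFormula α (n + 1)} (h : IsAE φ) : IsAE φ.all

/-- A group is virtually free if it has a free subgroup of finite index. -/
def VirtuallyFree (G : Type*) [Group G] : Prop :=
  ∃ H : Subgroup G, H.FiniteIndex ∧ Nonempty (IsFreeGroup H)

/-- A group is co-Hopfian if every injective endomorphism is surjective. -/
def CoHopfian (G : Type*) [Group G] : Prop :=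
  ∀ φ : G →* G, Function.Injective φ → Function.Surjective φ

/-- Two homomorphisms `φ, φ' : G → G'` are equivalent if they coincide up to
conjugation on every finite subgroup of `G`. -/
def HomEquiv {G G' : Type*} [Group G] [Group G'] (φ φ' : G →* G') : Prop :=
  ∀ H : Subgroup G, (H : Set G).Finite →
    ∃ g' : G', ∀ h ∈ H, φ' h = g' * φ h * g'⁻¹

/-- Two groups are ∀∃-equivalent if they satisfy the same ∀∃-sentences. -/
def AEEquivalent (G : Type*) (G' : Type*) [Group G] [Group G'] : Prop :=
  ∀ φ : groupLang.Sentence, IsAE φ → (G ⊨ φ ↔ G' ⊨ φ)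

/-- Two groups are ∃-equivalent if they satisfy the same existential sentences. -/
def ExistentiallyEquivalent (G : Type*) (G' : Type*) [Group G] [Group G'] : Prop :=
  ∀ φ : groupLang.Sentence, IsExistentialQF φ → (G ⊨ φ ↔ G' ⊨ φ)

/-- An endomorphism is rigid-testing: `G` is rigid if every endomorphism
equivalent to the identity is an automorphism. -/
def Rigid (G : Type*) [Group G] : Prop :=
  ∀ φ : G →* G, HomEquiv φ (MonoidHom.id G) → Function.Bijective φ

/-- `Out G` is finite, expressed as: the inner automorphisms form a finite index
subgroup of `Aut G`. -/
def OutFinite (G : Type*) [Group G] : Prop :=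
  (MulAut.conj : G →* MulAut G).range.FiniteIndex

/-- Iterated composition of an endomorphism. -/
def homPow {G : Type*} [Group G] (φ : G →* G) : ℕ → (G →* G)
  | 0 => MonoidHom.id G
  | n + 1 => φ.comp (homPow φ n)

/-- An endomorphism `φ` of `G` is class-permuting if some positive power of `φ`
is equivalent to the identity of `G`. -/
def ClassPermuting {G : Type*} [Group G] (φ : G →* G) : Prop :=
  ∃ n : ℕ, 1 ≤ n ∧ HomEquiv (homPow φ n) (MonoidHom.id G)

/-- A maximal finite subgroup: a finite subgroup maximal with respect to
inclusion among finite subgroups. -/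
def MaximalFiniteSubgroup {G : Type*} [Group G] (A : Subgroup G) : Prop :=
  (A : Set G).Finite ∧ ∀ B : Subgroup G, (B : Set G).Finite → A ≤ B → A = B

/-- Two subgroups are conjugate. -/
def SubgroupConj {G : Type*} [Group G] (A B : Subgroup G) : Prop :=
  ∃ g : G, B = A.map (MulAut.conj g).toMonoidHom

/-- A group is strongly co-Hopfian if there is a finite subset `F` of
`G \ {1}` such that every endomorphism whose kernel misses `F` is an
automorphism. -/
def StronglyCoHopfian (G : Type*) [Group G] : Prop :=
  ∃ F : Finset G, (1 : G) ∉ F ∧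
    ∀ φ : G →* G, (∀ f ∈ F, φ f ≠ 1) → Function.Bijective φ

/-- A group is finitely presented. -/
def GroupFinitelyPresented (G : Type*) [Group G] : Prop :=
  ∃ (n : ℕ) (rels : Finset (FreeGroup (Fin n))),
    Nonempty (PresentedGroup (rels : Set (FreeGroup (Fin n))) ≃* G)

/-- A length function on a group whose associated left-invariant metric is that of a tree. -/
structure TreeLen {H : Type*} [Group H] (N : H → ℕ) : Prop where
  zero : ∀ x, N x = 0 ↔ x = 1
  inv : ∀ x, N x⁻¹ = N x
  mul : ∀ x y, N (x * y) ≤ N x + N y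
  path : ∀ h, ∃ p : ℕ → H, p 0 = 1 ∧ p (N h) = h ∧ (∀ i, N ((p i)⁻¹ * p (i + 1)) ≤ 1) ∧
    ∀ i, i ≤ N h → N (p i) + N ((p i)⁻¹ * h) = N h
  tree : ∀ x y, N (x⁻¹ * y) = N x + N y →
    ∀ o, N (x⁻¹ * o) = N x + N o ∨ N (y⁻¹ * o) = N y + N o
  lip : ∀ f : H →* H, ∃ K : ℕ, ∀ h, N (f h) ≤ K * N h
  ball : ∀ n, {h | N h ≤ n}.Finite

section FreeGroupTree

variable {X : Type*} [DecidableEq X]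

theorem fg_norm_inv_mul_iff (x y : FreeGroup X) :
    (x⁻¹ * y).norm = x.norm + y.norm ↔
      ∀ a ∈ x.toWord.head?, ∀ b ∈ y.toWord.head?, a ≠ b := by
  constructor
  · rintro h a ha b hb rfl
    obtain ⟨u, hu⟩ : ∃ u, x.toWord = a :: u := by
      cases hx : x.toWord with
      | nil => simp [hx] at ha
      | cons c u => simp [hx] at ha; exact ⟨u, by rw [ha]⟩
    obtain ⟨v, hv⟩ : ∃ v, y.toWord = a :: v := by
      cases hx : y.toWord with
      | nil => simp [hx] at hb
      | cons c u => simp [hx] at hb; exact ⟨u, by rw [hb]⟩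
    have hx : x = FreeGroup.mk [a] * FreeGroup.mk u := by
      rw [FreeGroup.mul_mk, List.singleton_append, ← hu, FreeGroup.mk_toWord]
    have hy : y = FreeGroup.mk [a] * FreeGroup.mk v := by
      rw [FreeGroup.mul_mk, List.singleton_append, ← hv, FreeGroup.mk_toWord]
    have e : x⁻¹ * y = (FreeGroup.mk u)⁻¹ * FreeGroup.mk v := by
      rw [hx, hy]; group
    have h1 : x.norm = u.length + 1 := by simp [FreeGroup.norm, hu]
    have h2 : y.norm = v.length + 1 := by simp [FreeGroup.norm, hv]
    have h3 := FreeGroup.norm_mul_le (FreeGroup.mk u)⁻¹ (FreeGroup.mk v)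
    have h4 := FreeGroup.norm_mk_le (L₁ := u)
    have h5 := FreeGroup.norm_mk_le (L₁ := v)
    rw [FreeGroup.norm_inv_eq, ← e] at h3
    omega
  · intro h
    have hr : FreeGroup.IsReduced (FreeGroup.invRev x.toWord ++ y.toWord) := by
      rw [FreeGroup.IsReduced, List.isChain_append]
      refine ⟨?_, FreeGroup.isReduced_toWord, ?_⟩
      · rw [← FreeGroup.toWord_inv]; exact FreeGroup.isReduced_toWord
      · intro a ha b hb hab
        simp only [FreeGroup.invRev, List.getLast?_reverse, List.head?_map, Option.mem_def,
          Option.map_eq_some_iff] at ha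
        obtain ⟨c, hc, rfl⟩ := ha
        have := h c hc b hb
        obtain ⟨c1, c2⟩ := c
        obtain ⟨b1, b2⟩ := b
        simp only at hab
        subst hab
        cases c2 <;> cases b2 <;> simp_all
    rw [FreeGroup.norm, FreeGroup.toWord_mul, FreeGroup.toWord_inv, hr.reduce_eq]
    simp [FreeGroup.norm]

theorem freeGroup_treeLen [Finite X] : TreeLen (FreeGroup.norm : FreeGroup X → ℕ) where
  zero x := FreeGroup.norm_eq_zero
  inv x := FreeGroup.norm_inv_eq
  mul := FreeGroup.norm_mul_le
  path h := by
    have key : ∀ i, FreeGroup.mk (h.toWord.take i) * FreeGroup.mk (h.toWord.drop i) = h := by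
      intro i
      rw [FreeGroup.mul_mk, List.take_append_drop, FreeGroup.mk_toWord]
    refine ⟨fun i => FreeGroup.mk (h.toWord.take i), ?_, ?_, ?_, ?_⟩
    · simp [FreeGroup.one_eq_mk]
    · simp [FreeGroup.norm, FreeGroup.mk_toWord]
    · intro i
      simp only [List.take_add_one]
      rw [← FreeGroup.mul_mk, inv_mul_cancel_left]
      refine FreeGroup.norm_mk_le.trans ?_
      cases h.toWord[i]? <;> simp
    · intro i hi
      have e : (FreeGroup.mk (h.toWord.take i))⁻¹ * h = FreeGroup.mk (h.toWord.drop i) := by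
        rw [inv_mul_eq_iff_eq_mul, key]
      simp only [e]
      have h3 := FreeGroup.norm_mul_le (FreeGroup.mk (h.toWord.take i))
        (FreeGroup.mk (h.toWord.drop i))
      rw [key] at h3
      have h4 := FreeGroup.norm_mk_le (L₁ := h.toWord.take i)
      have h5 := FreeGroup.norm_mk_le (L₁ := h.toWord.drop i)
      have h6 : h.norm = h.toWord.length := rfl
      simp only [List.length_take, List.length_drop] at h4 h5
      omega
  tree x y h o := by
    rw [fg_norm_inv_mul_iff] at h ⊢
    rw [fg_norm_inv_mul_iff]
    by_contra! hc
    obtain ⟨⟨a, ha, b, hb, rfl⟩, ⟨c, hc, d, hd, rfl⟩⟩ := hc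
    have : a = c := by
      simp only [Option.mem_def] at hb hd
      rw [hb] at hd
      exact Option.some.inj hd
    exact h a ha c hc this
  lip f := by
    obtain ⟨K, hK⟩ := (Set.finite_range (fun a : X => (f (FreeGroup.of a)).norm)).bddAbove
    refine ⟨K, fun h => ?_⟩
    have : ∀ L : List (X × Bool), (f (FreeGroup.mk L)).norm ≤ K * L.length := by
      intro L
      induction L with
      | nil => simp [← FreeGroup.one_eq_mk]
      | cons a L ih =>
        have e : FreeGroup.mk (a :: L) = FreeGroup.mk [a] * FreeGroup.mk L := by
          rw [FreeGroup.mul_mk, List.singleton_append]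
        have h1 : (f (FreeGroup.mk [a])).norm ≤ K := by
          have h0 : (f (FreeGroup.of a.1)).norm ≤ K := hK ⟨a.1, rfl⟩
          obtain ⟨a, b⟩ := a
          cases b
          · have : FreeGroup.mk [(a, false)] = (FreeGroup.of a)⁻¹ := by
              simp [FreeGroup.of, FreeGroup.inv_mk, FreeGroup.invRev]
            rw [this, map_inv, FreeGroup.norm_inv_eq]; exact h0
          · exact h0
        rw [e, map_mul, List.length_cons, mul_add, mul_one]
        have := FreeGroup.norm_mul_le (f (FreeGroup.mk [a])) (f (FreeGroup.mk L))
        omega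
    have h2 := this h.toWord
    rwa [FreeGroup.mk_toWord] at h2
  ball n := by
    have := (List.finite_length_le (X × Bool) n).preimage
      (FreeGroup.toWord_injective (α := X)).injOn
    exact this

theorem TreeLen.comp {H H' : Type*} [Group H] [Group H'] {N : H → ℕ} (hN : TreeLen N)
    (e : H' ≃* H) : TreeLen (fun h => N (e h)) where
  zero x := by rw [hN.zero]; simp
  inv x := by rw [map_inv, hN.inv]
  mul x y := by rw [map_mul]; exact hN.mul _ _
  path h := by
    obtain ⟨p, h0, h1, h2, h3⟩ := hN.path (e h)
    refine ⟨fun i => e.symm (p i), by simp [h0], by simp [h1], ?_, ?_⟩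
    · intro i; simpa using h2 i
    · intro i hi; simpa using h3 i hi
  tree x y h o := by
    simpa using hN.tree (e x) (e y) (by simpa using h) (e o)
  lip f := by
    obtain ⟨K, hK⟩ := hN.lip ((e.toMonoidHom.comp f).comp e.symm.toMonoidHom)
    refine ⟨K, fun h => ?_⟩
    simpa using hK (e h)
  ball n := (hN.ball n).preimage e.injective.injOn

end FreeGroupTree

theorem freeGroup_finite_of_fg {X : Type*} (h : Group.FG (FreeGroup X)) : Finite X := by
  classical
  obtain ⟨S, hS⟩ := Group.fg_iff.1 h
  obtain ⟨hS, hf⟩ := hS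
  -- letters used
  let A : Set X := ⋃ s ∈ S, {a | a ∈ s.toWord.map Prod.fst}
  have hA : A.Finite := hf.biUnion fun s _ => List.finite_toSet _
  let f : FreeGroup X →* FreeGroup X :=
    FreeGroup.lift fun a => if a ∈ A then FreeGroup.of a else 1
  have hfS : ∀ s ∈ S, f s = s := by
    intro s hs
    have : ∀ L : List (X × Bool), (∀ a ∈ L, a.1 ∈ A) → f (FreeGroup.mk L) = FreeGroup.mk L := by
      intro L
      induction L with
      | nil => intro _; simp [← FreeGroup.one_eq_mk]
      | cons a L ih =>
        intro hL
        have e : FreeGroup.mk (a :: L) = FreeGroup.mk [a] * FreeGroup.mk L := by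
          rw [FreeGroup.mul_mk, List.singleton_append]
        rw [e, map_mul, ih (fun b hb => hL b (List.mem_cons_of_mem _ hb))]
        congr 1
        have ha := hL a List.mem_cons_self
        have h0 : f (FreeGroup.of a.1) = FreeGroup.of a.1 := by simp [f, ha]
        obtain ⟨a, b⟩ := a
        cases b
        · have : FreeGroup.mk [(a, false)] = (FreeGroup.of a)⁻¹ := by
            simp [FreeGroup.of, FreeGroup.inv_mk, FreeGroup.invRev]
          rw [this, map_inv, h0]
        · exact h0
    have h2 := this s.toWord (fun a ha => by
      simp only [A, Set.mem_iUnion]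
      exact ⟨s, hs, List.mem_map_of_mem ha⟩)
    rwa [FreeGroup.mk_toWord] at h2
  have hid : f = MonoidHom.id _ := MonoidHom.eq_of_eqOn_dense hS (fun s hs => hfS s hs)
  have : A = Set.univ := by
    ext a
    simp only [Set.mem_univ, iff_true]
    by_contra ha
    have h1 : f (FreeGroup.of a) = 1 := by simp [f, ha]
    rw [hid] at h1
    exact FreeGroup.of_ne_one a h1
  rw [this] at hA
  exact Set.finite_univ_iff.1 hA

section TreeGeometry

variable {H : Type*} [Group H] {N : H → ℕ}

theorem TreeLen.symm (hN : TreeLen N) (x y : H) : N (x⁻¹ * y) = N (y⁻¹ * x) := by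
  rw [← hN.inv (x⁻¹ * y)]; simp

theorem TreeLen.self (hN : TreeLen N) (x : H) : N (x⁻¹ * x) = 0 := by
  rw [hN.zero]; simp

theorem TreeLen.tri (hN : TreeLen N) (x y z : H) :
    N (x⁻¹ * z) ≤ N (x⁻¹ * y) + N (y⁻¹ * z) := by
  have := hN.mul (x⁻¹ * y) (y⁻¹ * z)
  rwa [show x⁻¹ * y * (y⁻¹ * z) = x⁻¹ * z by group] at this

theorem TreeLen.branch (hN : TreeLen N) {x p y : H}
    (h : N (x⁻¹ * p) + N (p⁻¹ * y) = N (x⁻¹ * y)) (o : H) :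
    N (x⁻¹ * p) + N (p⁻¹ * o) = N (x⁻¹ * o) ∨ N (y⁻¹ * p) + N (p⁻¹ * o) = N (y⁻¹ * o) := by
  have h1 := hN.tree (p⁻¹ * x) (p⁻¹ * y) (by
    rw [show (p⁻¹ * x)⁻¹ * (p⁻¹ * y) = x⁻¹ * y by group, hN.symm p x]; exact h.symm) (p⁻¹ * o)
  rw [show (p⁻¹ * x)⁻¹ * (p⁻¹ * o) = x⁻¹ * o by group,
    show (p⁻¹ * y)⁻¹ * (p⁻¹ * o) = y⁻¹ * o by group, hN.symm p x, hN.symm p y] at h1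
  rcases h1 with h1 | h1
  · exact Or.inl h1.symm
  · exact Or.inr h1.symm

theorem TreeLen.chain (hN : TreeLen N) {a q b : H}
    (h : N (a⁻¹ * q) + N (q⁻¹ * b) = N (a⁻¹ * b)) (r : ℕ → H) (n K : ℕ)
    (h0 : r 0 = a) (hn : r n = b) (hK : ∀ i, N ((r i)⁻¹ * r (i + 1)) ≤ K) :
    ∃ i ≤ n, N ((r i)⁻¹ * q) ≤ K := by
  by_contra! hc
  have key : ∀ i ≤ n, N ((r i)⁻¹ * q) + N (q⁻¹ * b) = N ((r i)⁻¹ * b) := by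
    intro i
    induction i with
    | zero => intro _; rw [h0]; exact h
    | succ i ih =>
      intro hi
      have hi' := ih (by omega)
      have hq := hc i (by omega)
      have hK' := hK i
      rcases hN.branch hi' (r (i + 1)) with h1 | h1
      · omega
      · rw [hN.symm b q, hN.symm q (r (i + 1)), hN.symm b (r (i + 1))] at h1
        omega
  have h1 := key n le_rfl
  have h2 := hc n le_rfl
  rw [hn, hN.self] at h1
  rw [hn] at h2
  omega

theorem TreeLen.quasi (hN : TreeLen N) (f : MulAut H) (K : ℕ) (hf : ∀ h, N (f h) ≤ K * N h)
    (hg : ∀ h, N (f⁻¹ h) ≤ K * N h) {x p y : H}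
    (h : N (x⁻¹ * p) + N (p⁻¹ * y) = N (x⁻¹ * y)) :
    N (f (x⁻¹ * p)) + N (f (p⁻¹ * y)) ≤ N (f (x⁻¹ * y)) + 2 * (K * K) := by
  obtain ⟨r, h0, h1, h2, h3⟩ := hN.path (f (x⁻¹ * y))
  obtain ⟨i, hi, hip⟩ := hN.chain h (fun i => x * f⁻¹ (r i)) (N (f (x⁻¹ * y))) K
    (by simp [h0]) (by simp only [h1]; simp) (by
      intro i
      have := hg ((r i)⁻¹ * r (i + 1))
      rw [map_mul, map_inv] at this
      rw [show (x * f⁻¹ (r i))⁻¹ * (x * f⁻¹ (r (i + 1))) = (f⁻¹ (r i))⁻¹ * f⁻¹ (r (i + 1)) by group]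
      refine this.trans ?_
      have := Nat.mul_le_mul_left K (h2 i)
      omega)
  have h4 := hf ((x * f⁻¹ (r i))⁻¹ * p)
  have h5 := Nat.mul_le_mul_left K hip
  have e : f ((x * f⁻¹ (r i))⁻¹ * p) = (r i)⁻¹ * f (x⁻¹ * p) := by
    simp [mul_assoc]
  rw [e] at h4
  have h6 := h3 i hi
  have h7 := hN.mul (r i) ((r i)⁻¹ * f (x⁻¹ * p))
  rw [mul_inv_cancel_left] at h7
  have h8 := hN.mul ((r i)⁻¹ * f (x⁻¹ * p))⁻¹ ((r i)⁻¹ * f (x⁻¹ * y))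
  rw [hN.inv, show ((r i)⁻¹ * f (x⁻¹ * p))⁻¹ * ((r i)⁻¹ * f (x⁻¹ * y)) = f (p⁻¹ * y) by
    simp [mul_assoc] ] at h8
  omega

theorem TreeLen.cocycle (hN : TreeLen N) {F : Type*} [Group F] [Finite F] (ρ : F →* MulAut H) :
    ∃ B : Set H, B.Finite ∧ ∀ c : F → H, (∀ f g, c (f * g) = c f * ρ f (c g)) →
      ∃ k : H, ∀ f, k⁻¹ * c f * ρ f k ∈ B := by
  classical
  cases nonempty_fintype F
  obtain ⟨K, hK⟩ : ∃ K : ℕ, ∀ f : F, ∀ h, N (ρ f h) ≤ K * N h := by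
    choose K hK using fun f : F => hN.lip (ρ f).toMonoidHom
    refine ⟨Finset.univ.sup K, fun f h => (hK f h).trans ?_⟩
    exact Nat.mul_le_mul_right _ (Finset.le_sup (f := K) (Finset.mem_univ f))
  set M := Fintype.card F with hM
  obtain ⟨ℓ, hℓ⟩ : ∃ ℓ : H → ℕ, ∀ h, ℓ h = ∑ f : F, N (ρ f h) := ⟨_, fun _ => rfl⟩
  have ℓinv : ∀ f h, ℓ (ρ f h) = ℓ h := by
    intro f h
    rw [hℓ, hℓ]
    refine Fintype.sum_equiv (Equiv.mulRight f) _ _ ?_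
    intro g; simp
  have ℓsymm : ∀ h, ℓ h⁻¹ = ℓ h := by
    intro h; simp only [hℓ, map_inv, hN.inv]
  have ℓmul : ∀ x y, ℓ (x * y) ≤ ℓ x + ℓ y := by
    intro x y
    simp only [hℓ, map_mul, ← Finset.sum_add_distrib]
    exact Finset.sum_le_sum fun f _ => hN.mul _ _
  have ℓle : ∀ x, ℓ x ≤ M * (K * N x) := by
    intro x
    rw [hℓ]
    refine (Finset.sum_le_card_nsmul _ _ (K * N x) fun f _ => hK f x).trans ?_
    simp [hM]
  have leℓ : ∀ x, N x ≤ ℓ x := by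
    intro x
    rw [hℓ]
    have := Finset.single_le_sum (f := fun f => N (ρ f x)) (fun _ _ => Nat.zero_le _)
      (Finset.mem_univ (1 : F))
    simpa using this
  have ℓone : ℓ 1 = 0 := by
    have := ℓle 1
    rw [(hN.zero 1).2 rfl] at this
    simpa using this
  -- coarse additivity along tree geodesics
  have ℓadd : ∀ x p y : H, N (x⁻¹ * p) + N (p⁻¹ * y) = N (x⁻¹ * y) →
      ℓ (x⁻¹ * p) + ℓ (p⁻¹ * y) ≤ ℓ (x⁻¹ * y) + M * (2 * (K * K)) := by
    intro x p y h
    rw [hℓ, hℓ, hℓ, ← Finset.sum_add_distrib]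
    have : M * (2 * (K * K)) = ∑ _f : F, 2 * (K * K) := by simp [hM]
    rw [this, ← Finset.sum_add_distrib]
    refine Finset.sum_le_sum fun f _ => hN.quasi (ρ f) K (hK f) ?_ h
    intro h
    rw [← map_inv]; exact hK _ _
  obtain ⟨C, hC⟩ : ∃ C : ℕ, C = 2 * (M * K) + 2 * (M * (2 * (K * K))) := ⟨_, rfl⟩
  -- midpoints
  have mid : ∀ x y : H, ∃ m : H, ∀ o : H, 2 * ℓ (m⁻¹ * o) + ℓ (x⁻¹ * y) ≤
      2 * max (ℓ (x⁻¹ * o)) (ℓ (y⁻¹ * o)) + C := by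
    intro x y
    obtain ⟨r, h0, h1, h2, h3⟩ := hN.path (x⁻¹ * y)
    have hex : ∃ i, ℓ (x⁻¹ * y) ≤ 2 * ℓ (r i) := ⟨N (x⁻¹ * y), by rw [h1]; omega⟩
    have hle : Nat.find hex ≤ N (x⁻¹ * y) := Nat.find_min' hex (by rw [h1]; omega)
    have hsp := Nat.find_spec hex
    have hup : 2 * ℓ (r (Nat.find hex)) ≤ ℓ (x⁻¹ * y) + 2 * (M * K) := by
      rcases hz : Nat.find hex with _ | j
      · rw [h0, ℓone]; omega
      · have hlt := Nat.find_min hex (m := j) (by omega)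
        have e := ℓmul (r j) ((r j)⁻¹ * r (j + 1))
        rw [mul_inv_cancel_left] at e
        have e2 := ℓle ((r j)⁻¹ * r (j + 1))
        have e3 := Nat.mul_le_mul_left M (Nat.mul_le_mul_left K (h2 j))
        rw [mul_one] at e3
        omega
    set i := Nat.find hex
    have hbet := h3 i hle
    have hbet' : N (x⁻¹ * (x * r i)) + N ((x * r i)⁻¹ * y) = N (x⁻¹ * y) := by
      rw [inv_mul_cancel_left, mul_inv_rev, mul_assoc]; exact hbet
    have e4 := ℓmul (r i) ((r i)⁻¹ * (x⁻¹ * y))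
    rw [mul_inv_cancel_left] at e4
    refine ⟨x * r i, fun o => ?_⟩
    rcases hN.branch hbet' o with h | h
    · have := ℓadd _ _ _ h
      rw [inv_mul_cancel_left] at this
      have := le_max_left (ℓ (x⁻¹ * o)) (ℓ (y⁻¹ * o))
      omega
    · have := ℓadd _ _ _ h
      rw [← ℓsymm (y⁻¹ * (x * r i)), show (y⁻¹ * (x * r i))⁻¹ = (r i)⁻¹ * (x⁻¹ * y) by group] at this
      have := le_max_right (ℓ (x⁻¹ * o)) (ℓ (y⁻¹ * o))
      omega
  refine ⟨{h | N h ≤ C}, hN.ball C, fun c hc => ?_⟩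
  -- the radius function of the orbit of 1
  obtain ⟨rad, hrad⟩ : ∃ rad : H → ℕ, ∀ y, rad y = Finset.univ.sup fun f : F => ℓ (y⁻¹ * c f) :=
    ⟨_, fun _ => rfl⟩
  have hradle : ∀ y f, ℓ (y⁻¹ * c f) ≤ rad y := by
    intro y f
    rw [hrad]
    exact Finset.le_sup (f := fun f : F => ℓ (y⁻¹ * c f)) (Finset.mem_univ f)
  obtain ⟨k, hk⟩ : ∃ k : H, ∀ y, rad k ≤ rad y := by
    have hne : (Set.range rad).Nonempty := ⟨_, 1, rfl⟩
    obtain ⟨k, hk⟩ := Nat.sInf_mem hne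
    exact ⟨k, fun y => by rw [hk]; exact Nat.sInf_le ⟨y, rfl⟩⟩
  refine ⟨k, fun f => ?_⟩
  have hinv : ∀ g, ℓ ((c f * ρ f k)⁻¹ * c g) ≤ rad k := by
    intro g
    have e : c g = c f * ρ f (c (f⁻¹ * g)) := by rw [← hc]; simp
    rw [e, show (c f * ρ f k)⁻¹ * (c f * ρ f (c (f⁻¹ * g))) = ρ f (k⁻¹ * c (f⁻¹ * g)) by
      rw [map_mul, map_inv]; group, ℓinv]
    exact hradle _ _
  obtain ⟨m, hm⟩ := mid k (c f * ρ f k)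
  have h1 : 2 * rad m + ℓ (k⁻¹ * (c f * ρ f k)) ≤ 2 * rad k + C := by
    obtain ⟨g, -, hg⟩ := Finset.exists_mem_eq_sup (Finset.univ : Finset F) ⟨1, Finset.mem_univ _⟩
      (fun f : F => ℓ (m⁻¹ * c f))
    rw [hrad m, hg]
    have e1 := hm (c g)
    have e2 := max_le (hradle k g) (hinv g)
    omega
  have h2 := hk m
  have h3 := leℓ (k⁻¹ * (c f * ρ f k))
  rw [← mul_assoc] at h1 h3
  show N (k⁻¹ * c f * ρ f k) ≤ C
  omega

end TreeGeometry

section FiniteSubgroups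

variable {G : Type*} [Group G]

theorem lift_bounded (H : Subgroup G) [H.Normal] {N : H → ℕ} (hN : TreeLen N)
    (htf : ∀ A : Subgroup G, (A : Set G).Finite → ∀ x ∈ A, x ∈ H → x = 1)
    (F : Subgroup G) (hF : (F : Set G).Finite) :
    ∃ S : Set G, S.Finite ∧ ∀ A : Subgroup G, (A : Set G).Finite →
      A.map (QuotientGroup.mk' H) = F.map (QuotientGroup.mk' H) →
      ∃ g : G, ∀ a ∈ A, g * a * g⁻¹ ∈ S := by
  have : Finite F := hF
  obtain ⟨B, hB, hBc⟩ := hN.cocycle ((MulAut.conjNormal (H := H)).comp F.subtype)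
  refine ⟨Set.image2 (fun b f => b * f) ((fun h : H => (h : G)) '' B) (F : Set G),
    Set.Finite.image2 _ (hB.image _) hF, fun A hA hAF => ?_⟩
  have hsep : ∀ x ∈ A, ∀ y ∈ A, QuotientGroup.mk' H x = QuotientGroup.mk' H y → x = y := by
    intro x hx y hy hxy
    have h1 : x⁻¹ * y ∈ H := QuotientGroup.eq.1 hxy
    have h2 := htf A hA _ (A.mul_mem (A.inv_mem hx) hy) h1
    exact inv_mul_eq_one.1 h2
  have hex : ∀ f : F, ∃ a ∈ A, QuotientGroup.mk' H a = QuotientGroup.mk' H f := by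
    intro f
    have : QuotientGroup.mk' H (f : G) ∈ A.map (QuotientGroup.mk' H) := by
      rw [hAF]; exact Subgroup.mem_map_of_mem _ f.2
    exact Subgroup.mem_map.1 this
  choose a haA ha using hex
  have hmem : ∀ f : F, a f * (f : G)⁻¹ ∈ H := by
    intro f
    rw [← QuotientGroup.ker_mk' H, MonoidHom.mem_ker, map_mul, map_inv, ha, mul_inv_cancel]
  have hmul : ∀ f g : F, a (f * g) = a f * a g := by
    intro f g
    apply hsep _ (haA _) _ (A.mul_mem (haA _) (haA _))
    rw [ha, map_mul, ha, ha, Subgroup.coe_mul, map_mul]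
  obtain ⟨k, hk⟩ := hBc (fun f => ⟨a f * (f : G)⁻¹, hmem f⟩) (by
    intro f g
    apply Subtype.ext
    simp only [MonoidHom.comp_apply, Subgroup.coe_mul, MulAut.conjNormal_apply, hmul,
      Subgroup.coe_subtype]
    group)
  refine ⟨(k : G)⁻¹, fun x hx => ?_⟩
  obtain ⟨f, hf, hfx⟩ : ∃ f ∈ F, QuotientGroup.mk' H f = QuotientGroup.mk' H x := by
    have : QuotientGroup.mk' H x ∈ F.map (QuotientGroup.mk' H) := by
      rw [← hAF]; exact Subgroup.mem_map_of_mem _ hx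
    exact Subgroup.mem_map.1 this
  have hxa : x = a ⟨f, hf⟩ := hsep _ hx _ (haA _) (by rw [ha]; exact hfx.symm)
  refine ⟨_, ⟨_, hk ⟨f, hf⟩, rfl⟩, f, hf, ?_⟩
  simp only [MonoidHom.comp_apply, Subgroup.coe_mul, MulAut.conjNormal_apply,
      Subgroup.coe_subtype, Subgroup.coe_inv, hxa]
  group

theorem exists_finite_set_conj (hfg : Group.FG G) (hvf : VirtuallyFree G) :
    ∃ S : Set G, S.Finite ∧ ∀ A : Subgroup G, (A : Set G).Finite →
      ∃ g : G, ∀ a ∈ A, g * a * g⁻¹ ∈ S := by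
  classical
  obtain ⟨H0, hfi, ⟨hfree⟩⟩ := hvf
  set H := H0.normalCore with hH
  have hHfi : H.FiniteIndex := inferInstance
  have hHfree : IsFreeGroup H :=
    IsFreeGroup.ofMulEquiv (Subgroup.subgroupOfEquivOfLe (H0.normalCore_le))
  have hHfg : Group.FG H := inferInstance
  let e : H ≃* FreeGroup (IsFreeGroup.Generators H) := (IsFreeGroup.toFreeGroup H)
  have hfin : Finite (IsFreeGroup.Generators H) :=
    freeGroup_finite_of_fg (Group.fg_of_surjective (f := e.toMonoidHom) e.surjective)
  have hN := (freeGroup_treeLen (X := IsFreeGroup.Generators H)).comp e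
  have htf : ∀ A : Subgroup G, (A : Set G).Finite → ∀ x ∈ A, x ∈ H → x = 1 := by
    intro A hA x hx hxH
    have : Finite A := hA
    obtain ⟨n, hn, hxn⟩ := (isOfFinOrder_of_finite (⟨x, hx⟩ : A)).exists_pow_eq_one
    have hxn' : x ^ n = 1 := congrArg Subtype.val hxn
    have h1 : (e ⟨x, hxH⟩) ^ n = 1 ^ n := by
      rw [← map_pow, one_pow, map_eq_one_iff e e.injective]
      exact Subtype.ext hxn'
    have h2 := IsMulTorsionFree.pow_left_injective hn.ne' h1
    rw [map_eq_one_iff e e.injective] at h2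
    exact congrArg Subtype.val h2
  have hq : ∀ Q : Subgroup (G ⧸ H), ∃ S : Set G, S.Finite ∧ ∀ A : Subgroup G,
      (A : Set G).Finite → A.map (QuotientGroup.mk' H) = Q →
      ∃ g : G, ∀ a ∈ A, g * a * g⁻¹ ∈ S := by
    intro Q
    by_cases hQ : ∃ F : Subgroup G, (F : Set G).Finite ∧ F.map (QuotientGroup.mk' H) = Q
    · obtain ⟨F, hF, rfl⟩ := hQ
      exact lift_bounded H hN htf F hF
    · exact ⟨∅, Set.finite_empty, fun A hA hAQ => absurd ⟨A, hA, hAQ⟩ hQ⟩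
  choose S hS hSA using hq
  refine ⟨⋃ Q, S Q, Set.finite_iUnion hS, fun A hA => ?_⟩
  obtain ⟨g, hg⟩ := hSA _ A hA rfl
  exact ⟨g, fun a ha => Set.mem_iUnion.2 ⟨_, hg a ha⟩⟩

theorem SubgroupConj.refl' (A : Subgroup G) : SubgroupConj A A :=
  ⟨1, by ext; simp⟩

theorem SubgroupConj.symm' {A B : Subgroup G} (h : SubgroupConj A B) : SubgroupConj B A := by
  obtain ⟨g, rfl⟩ := h
  refine ⟨g⁻¹, ?_⟩
  rw [Subgroup.map_map]
  convert (Subgroup.map_id A).symm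
  ext; simp [mul_assoc]

theorem SubgroupConj.trans' {A B C : Subgroup G} (h : SubgroupConj A B) (h' : SubgroupConj B C) :
    SubgroupConj A C := by
  obtain ⟨g, rfl⟩ := h
  obtain ⟨k, rfl⟩ := h'
  refine ⟨k * g, ?_⟩
  rw [Subgroup.map_map]
  congr 1
  ext; simp [mul_assoc]

theorem SubgroupConj.map' {A B : Subgroup G} (h : SubgroupConj A B) (f : G →* G) :
    SubgroupConj (A.map f) (B.map f) := by
  obtain ⟨g, rfl⟩ := h
  refine ⟨f g, ?_⟩
  rw [Subgroup.map_map, Subgroup.map_map]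
  congr 1
  ext; simp

theorem homPow_apply' (φ : G →* G) (n : ℕ) (x : G) : homPow φ n x = (φ)^[n] x := by
  induction n with
  | zero => rfl
  | succ n ih => rw [Function.iterate_succ_apply', ← ih]; rfl

theorem exists_maximal_ge {S : Set G} (hS : S.Finite)
    (hSA : ∀ A : Subgroup G, (A : Set G).Finite → ∃ g : G, ∀ a ∈ A, g * a * g⁻¹ ∈ S) :
    (∀ A : Subgroup G, (A : Set G).Finite → (A : Set G).ncard ≤ S.ncard) ∧
    ∀ A : Subgroup G, (A : Set G).Finite → ∃ B, MaximalFiniteSubgroup B ∧ A ≤ B := by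
  have hcard : ∀ A : Subgroup G, (A : Set G).Finite → (A : Set G).ncard ≤ S.ncard := by
    intro A hA
    obtain ⟨g, hg⟩ := hSA A hA
    refine Set.ncard_le_ncard_of_injOn (fun a => g * a * g⁻¹) hg ?_ hS
    intro a _ b _ hab
    simpa using hab
  refine ⟨hcard, fun A hA => ?_⟩
  let T : Set ℕ := {n | ∃ B : Subgroup G, (B : Set G).Finite ∧ A ≤ B ∧ (B : Set G).ncard = n}
  have hT : T.Nonempty := ⟨_, A, hA, le_rfl, rfl⟩
  have hTb : BddAbove T := ⟨S.ncard, by rintro n ⟨B, hB, -, rfl⟩; exact hcard B hB⟩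
  obtain ⟨B, hB, hAB, hBn⟩ := Nat.sSup_mem hT hTb
  refine ⟨B, ⟨hB, fun C hC hBC => ?_⟩, hAB⟩
  have h1 : (C : Set G).ncard ≤ (B : Set G).ncard := by
    rw [hBn]; exact le_csSup hTb ⟨C, hC, hAB.trans hBC, rfl⟩
  exact SetLike.coe_injective (Set.eq_of_subset_of_ncard_le hBC h1 hC)

theorem classPermuting_forward (φ : G →* G) (h : ClassPermuting φ) :
    ((∀ A : Subgroup G, MaximalFiniteSubgroup A → MaximalFiniteSubgroup (A.map φ)) ∧
        ∀ A B : Subgroup G, MaximalFiniteSubgroup A → MaximalFiniteSubgroup B →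
          (SubgroupConj (A.map φ) (B.map φ) ↔ SubgroupConj A B)) := by
  obtain ⟨n, hn, hφ⟩ := h
  obtain ⟨k, rfl⟩ : ∃ k, n = k + 1 := ⟨n - 1, by omega⟩
  have hk1 : ∀ x, homPow φ (k + 1) x = homPow φ k (φ x) := by
    intro x; rw [homPow_apply', homPow_apply', Function.iterate_succ_apply]
  have hk2 : ∀ x, homPow φ (k + 1) x = φ (homPow φ k x) := fun x => rfl
  have hinj : ∀ B : Subgroup G, (B : Set G).Finite → Set.InjOn (homPow φ k) B := by
    intro B hB x hx y hy hxy
    obtain ⟨g, hg⟩ := hφ B hB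
    have e1 := hg x hx
    have e2 := hg y hy
    rw [hk2, hxy, ← hk2, ← e2] at e1
    exact e1
  constructor
  · intro A hA
    have hfin : ((A.map φ : Subgroup G) : Set G).Finite := by
      rw [Subgroup.coe_map]; exact hA.1.image _
    refine ⟨hfin, fun B hB hAB => le_antisymm hAB ?_⟩
    obtain ⟨g, hg⟩ := hφ A hA.1
    have hC := hA.2 ((B.map (homPow φ k)).map (MulAut.conj g).toMonoidHom)
      (by rw [Subgroup.coe_map, Subgroup.coe_map]; exact (hB.image _).image _)
      (by
        intro a ha
        refine ⟨_, ⟨φ a, hAB (Subgroup.mem_map_of_mem _ ha), rfl⟩, ?_⟩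
        have := hg a ha
        rw [hk1] at this
        exact this.symm)
    intro b hb
    have hbA : g * homPow φ k b * g⁻¹ ∈ A := by
      rw [hC]; exact ⟨_, ⟨b, hb, rfl⟩, rfl⟩
    have e := hg _ hbA
    rw [hk1] at e
    simp only [MonoidHom.id_apply, mul_left_inj, mul_right_inj] at e
    have h2 : φ (g * homPow φ k b * g⁻¹) ∈ A.map φ := Subgroup.mem_map_of_mem _ hbA
    have := hinj B hB hb (hAB h2) e
    rw [this]; exact h2
  · intro A B hA hB
    refine ⟨fun h => ?_, fun h => h.map' φ⟩
    have hcj : ∀ A : Subgroup G, (A : Set G).Finite →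
        SubgroupConj ((A.map φ).map (homPow φ k)) A := by
      intro A hA
      obtain ⟨g, hg⟩ := hφ A hA
      refine ⟨g, ?_⟩
      ext x
      simp only [Subgroup.map_map, Subgroup.mem_map]
      constructor
      · intro hx
        refine ⟨x, hx, ?_⟩
        have := hg x hx
        rw [hk1] at this
        exact this.symm
      · rintro ⟨y, hy, rfl⟩
        have := hg y hy
        rw [hk1] at this
        change g * homPow φ k (φ y) * g⁻¹ ∈ A
        rw [← this]; exact hy
    exact ((hcj A hA.1).symm'.trans' (h.map' (homPow φ k))).trans' (hcj B hB.1)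

theorem classPermuting_backward {S : Set G} (hS : S.Finite)
    (hSA : ∀ A : Subgroup G, (A : Set G).Finite → ∃ g : G, ∀ a ∈ A, g * a * g⁻¹ ∈ S)
    (φ : G →* G)
    (h1 : ∀ A : Subgroup G, MaximalFiniteSubgroup A → MaximalFiniteSubgroup (A.map φ))
    (h2 : ∀ A B : Subgroup G, MaximalFiniteSubgroup A → MaximalFiniteSubgroup B →
          (SubgroupConj (A.map φ) (B.map φ) ↔ SubgroupConj A B)) : ClassPermuting φ := by
  obtain ⟨hcard, hmax⟩ := exists_maximal_ge hS hSA
  let st : Setoid {A : Subgroup G // MaximalFiniteSubgroup A} :=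
    { r := fun A B => SubgroupConj A.1 B.1
      iseqv := ⟨fun A => SubgroupConj.refl' _, fun h => h.symm', fun h h' => h.trans' h'⟩ }
  have hfinQ : Finite (Quotient st) := by
    have hrep : ∀ q : Quotient st, ∃ B : {B : Subgroup G // (B : Set G) ⊆ S},
        SubgroupConj q.out.1 B.1 := by
      intro q
      obtain ⟨g, hg⟩ := hSA q.out.1 q.out.2.1
      refine ⟨⟨q.out.1.map (MulAut.conj g).toMonoidHom, ?_⟩, g, rfl⟩
      rintro _ ⟨a, ha, rfl⟩
      exact hg a ha
    choose rep hrep using hrep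
    have hfS : Finite {B : Subgroup G // (B : Set G) ⊆ S} :=
      Set.Finite.to_subtype (s := {B : Subgroup G | (B : Set G) ⊆ S})
        (hS.powerset.preimage (f := fun B : Subgroup G => (B : Set G))
          SetLike.coe_injective.injOn)
    refine Finite.of_injective rep fun q q' hqq => ?_
    have h3 := hrep q
    rw [hqq] at h3
    rw [← Quotient.out_eq q, ← Quotient.out_eq q']
    exact Quotient.sound (h3.trans' (hrep q').symm')
  let Φ : {A : Subgroup G // MaximalFiniteSubgroup A} → {A : Subgroup G // MaximalFiniteSubgroup A} :=
    fun A => ⟨A.1.map φ, h1 _ A.2⟩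
  let F : Quotient st → Quotient st := Quotient.map Φ (fun A B h => SubgroupConj.map' h φ)
  have hF : Function.Injective F := by
    intro q q'
    refine Quotient.inductionOn₂ q q' fun A B hAB => ?_
    exact Quotient.sound ((h2 A.1 B.1 A.2 B.2).1 (Quotient.exact hAB))
  let π : Equiv.Perm (Quotient st) := Equiv.ofBijective F (Finite.injective_iff_bijective.1 hF)
  obtain ⟨m, hm, hπ⟩ := (isOfFinOrder_of_finite π).exists_pow_eq_one
  have hit : ∀ (n : ℕ) (A : {A : Subgroup G // MaximalFiniteSubgroup A}),
      (π ^ n) (Quotient.mk st A) = Quotient.mk st (Φ^[n] A) ∧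
        (Φ^[n] A).1 = A.1.map (homPow φ n) := by
    intro n A
    induction n with
    | zero => exact ⟨rfl, by ext; simp [homPow]⟩
    | succ n ih =>
      rw [pow_succ', Equiv.Perm.mul_apply, ih.1, Function.iterate_succ_apply']
      refine ⟨rfl, ?_⟩
      change (Φ^[n] A).1.map φ = A.1.map (φ.comp (homPow φ n))
      rw [ih.2, Subgroup.map_map]
  refine ⟨m * (S.ncard).factorial, Nat.mul_pos hm (Nat.factorial_pos _), fun A0 hA0 => ?_⟩
  obtain ⟨A, hA, hA0A⟩ := hmax A0 hA0
  obtain ⟨g, hg⟩ : SubgroupConj (A.map (homPow φ m)) A := by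
    obtain ⟨e1, e2⟩ := hit m ⟨A, hA⟩
    rw [hπ, Equiv.Perm.one_apply] at e1
    have := Quotient.exact e1
    rw [← e2]
    exact SubgroupConj.symm' this
  let θ : G →* G := (MulAut.conj g).toMonoidHom.comp (homPow φ m)
  have hθ : ∀ x, θ x = g * homPow φ m x * g⁻¹ := fun x => rfl
  have hθA : A.map θ = A := by
    rw [← Subgroup.map_map]; exact hg.symm
  have hfinA : Finite (A : Set G) := hA.1
  have hmaps : Set.MapsTo θ (A : Set G) A := by
    intro a ha
    rw [← hθA]; exact ⟨a, ha, rfl⟩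
  have hsurj : Function.Surjective (hmaps.restrict θ A A) := by
    rintro ⟨b, hb⟩
    rw [← hθA] at hb
    obtain ⟨a, ha, hab⟩ := hb
    exact ⟨⟨a, ha⟩, Subtype.ext hab⟩
  let α : Equiv.Perm (A : Set G) :=
    Equiv.ofBijective _ (Finite.surjective_iff_bijective.1 hsurj)
  have hα : α ^ (S.ncard).factorial = 1 := by
    have hd : Nat.card (Equiv.Perm (A : Set G)) ∣ (S.ncard).factorial := by
      rw [Nat.card_perm]
      exact Nat.factorial_dvd_factorial (hcard A hA.1)
    obtain ⟨d, hd⟩ := hd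
    rw [hd, pow_mul, pow_card_eq_one', one_pow]
  have hαit : ∀ (j : ℕ) (a : (A : Set G)), (((α ^ j) a : (A : Set G)) : G) = θ^[j] (a : G) := by
    intro j a
    induction j with
    | zero => rfl
    | succ j ih =>
      rw [pow_succ', Equiv.Perm.mul_apply, Function.iterate_succ_apply', ← ih]
      rfl
  have hθit : ∀ j : ℕ, ∃ k : G, ∀ x, θ^[j] x = k * (homPow φ m)^[j] x * k⁻¹ := by
    intro j
    induction j with
    | zero => exact ⟨1, fun x => by simp⟩
    | succ j ih =>
      obtain ⟨k, hk⟩ := ih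
      refine ⟨g * homPow φ m k, fun x => ?_⟩
      rw [Function.iterate_succ_apply', Function.iterate_succ_apply', hk, hθ, map_mul, map_mul,
        map_inv]
      group
  obtain ⟨k, hk⟩ := hθit (S.ncard).factorial
  refine ⟨k, fun a ha => ?_⟩
  have e1 := hαit (S.ncard).factorial ⟨a, hA0A ha⟩
  rw [hα, Equiv.Perm.one_apply, hk] at e1
  have e2 : (homPow φ m : G → G) = φ^[m] := funext (homPow_apply' φ m)
  rw [homPow_apply', Function.iterate_mul, ← e2]
  exact e1

end FiniteSubgroups

/-- An endomorphism of a finitely generated virtually free group is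
class-permuting iff it maps maximal finite subgroups to maximal finite
subgroups and preserves (non-)conjugacy of maximal finite subgroups. -/
theorem classPermuting_iff
    (G : Type*) [Group G] (hfg : Group.FG G) (hvf : VirtuallyFree G)
    (φ : G →* G) :
    ClassPermuting φ ↔
      ((∀ A : Subgroup G, MaximalFiniteSubgroup A → MaximalFiniteSubgroup (A.map φ)) ∧
        ∀ A B : Subgroup G, MaximalFiniteSubgroup A → MaximalFiniteSubgroup B →
          (SubgroupConj (A.map φ) (B.map φ) ↔ SubgroupConj A B)) := by
  constructor
  · exact classPermuting_forward φ
  · rintro ⟨h1, h2⟩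
    obtain ⟨S, hS, hSA⟩ := exists_finite_set_conj hfg hvf
    exact classPermuting_backward hS hSA φ h1 h2
end

section
/- Let G be a finitely generated virtually free group. Then the set Aut₀(G) = {σ ∈ Aut(G) : σ ∼ id_G} is a subgroup of Aut(G) of finite index. -/
open FirstOrder Language

namespace Aut0

open scoped Pointwise

theorem initial_append_iff {α : Type*} {P : List α} : ∀ {L M : List α}, P <+: L ++ M ↔
    P <+: L ∨ ∃ t, P = L ++ t ∧ t <+: M := by
  induction P with
  | nil => intro L M; simp
  | cons a P ih =>
    intro L M
    cases L with
    | nil => simp [List.prefix_nil]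
    | cons b L =>
      simp only [List.cons_append, List.cons_prefix_cons, ih, List.cons.injEq]
      grind

/-- Existence of a proper word length on a finitely generated group. -/
theorem exists_length (G : Type*) [Group G] (hfg : Group.FG G) :
    ∃ (A : Set G) (ℓ : G → ℕ), A.Finite ∧ ℓ 1 = 0 ∧ (∀ g, ℓ g⁻¹ = ℓ g) ∧
      (∀ g h, ℓ (g * h) ≤ ℓ g + ℓ h) ∧ (∀ n, {g | ℓ g ≤ n}.Finite) ∧
      (∀ l : List G, (∀ a ∈ l, a ∈ A) → ℓ l.prod ≤ l.length) ∧
      (∀ g, ∃ l : List G, (∀ a ∈ l, a ∈ A) ∧ l.prod = g ∧ l.length = ℓ g) := by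
  classical
  obtain ⟨S, hS⟩ := hfg.out
  let A : Set G := (S : Set G) ∪ (S : Set G)⁻¹
  have hA : A.Finite := S.finite_toSet.union (S.finite_toSet.inv)
  have hAinv : ∀ a ∈ A, a⁻¹ ∈ A := by
    rintro a (h | h)
    · right; simpa using h
    · left; simpa using h
  have hex : ∀ g : G, ∃ n : ℕ, ∃ l : List G, (∀ a ∈ l, a ∈ A) ∧ l.prod = g ∧ l.length = n := by
    intro g
    have hg : g ∈ Subgroup.closure (S : Set G) := by rw [hS]; trivial
    rw [← Subgroup.mem_toSubmonoid, Subgroup.closure_toSubmonoid] at hg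
    obtain ⟨l, hl, hp⟩ := Submonoid.exists_list_of_mem_closure hg
    exact ⟨l.length, l, hl, hp, rfl⟩
  let ℓ : G → ℕ := fun g => Nat.find (hex g)
  have hgeo : ∀ g, ∃ l : List G, (∀ a ∈ l, a ∈ A) ∧ l.prod = g ∧ l.length = ℓ g :=
    fun g => Nat.find_spec (hex g)
  have hle : ∀ l : List G, (∀ a ∈ l, a ∈ A) → ℓ l.prod ≤ l.length :=
    fun l hl => Nat.find_min' (hex l.prod) ⟨l, hl, rfl, rfl⟩
  have hinv : ∀ g, ℓ g⁻¹ ≤ ℓ g := by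
    intro g
    obtain ⟨l, hl, hp, hn⟩ := hgeo g
    have := hle (l.map (·⁻¹)).reverse (by
      intro a ha
      simp only [List.mem_reverse, List.mem_map] at ha
      obtain ⟨b, hb, rfl⟩ := ha
      exact hAinv b (hl b hb))
    rw [← List.prod_inv_reverse, hp] at this
    simpa [hn] using this
  refine ⟨A, ℓ, hA, ?_, ?_, ?_, ?_, hle, hgeo⟩
  · simpa using hle [] (by simp)
  · intro g
    exact le_antisymm (hinv g) (by simpa using hinv g⁻¹)
  · intro g h
    obtain ⟨l, hl, hp, hn⟩ := hgeo g
    obtain ⟨l', hl', hp', hn'⟩ := hgeo h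
    have := hle (l ++ l') (by
      intro a ha
      rcases List.mem_append.1 ha with h | h
      · exact hl a h
      · exact hl' a h)
    simpa [hp, hp', hn, hn'] using this
  · intro n
    induction n with
    | zero =>
      refine (Set.finite_singleton (1 : G)).subset ?_
      intro g hg
      obtain ⟨l, hl, hp, hn⟩ := hgeo g
      have h0 : l.length = 0 := by
        have : ℓ g ≤ 0 := hg
        omega
      rw [List.length_eq_zero_iff] at h0
      subst h0
      simpa using hp.symm
    | succ n ih =>
      refine ((hA.mul ih).union (Set.finite_singleton (1 : G))).subset ?_
      intro g hg
      obtain ⟨l, hl, hp, hn⟩ := hgeo g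
      cases l with
      | nil => right; simpa using hp.symm
      | cons a l =>
        left
        rw [List.prod_cons] at hp
        refine Set.mem_mul.2 ⟨a, hl a (by simp), l.prod, ?_, hp⟩
        have h1 : ℓ g ≤ n + 1 := hg
        have h2 := hle l (fun b hb => hl b (by simp [hb]))
        simp only [List.length_cons] at hn
        show ℓ l.prod ≤ n
        omega

/-- Prefix products of a reduction of a word are prefix products of the word. -/
theorem prefix_of_reduction {X : Type*} {W W' : List (X × Bool)} (h : FreeGroup.Red W W') :
    ∀ P, P <+: W' → ∃ Q, Q <+: W ∧ FreeGroup.mk Q = FreeGroup.mk P := by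
  induction h with
  | refl => exact fun P hP => ⟨P, hP, rfl⟩
  | tail _ hstep ih =>
    intro P hP
    cases hstep with
    | @not L₁ L₂ x b =>
      rw [initial_append_iff] at hP
      rcases hP with hP | ⟨t, rfl, ht⟩
      · exact ih P (hP.trans (List.prefix_append _ _))
      · obtain ⟨Q, hQ, hQ'⟩ := ih (L₁ ++ (x, b) :: (x, !b) :: t) (by
          obtain ⟨r, rfl⟩ := ht
          exact ⟨r, by simp⟩)
        exact ⟨Q, hQ, hQ'.trans (Quot.sound FreeGroup.Red.Step.not)⟩

theorem discrete_ivt {X : Type*} (φ : FreeGroup X → ℤ) (K L : ℤ) (hL : 0 ≤ L) (hK : 0 ≤ K) :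
    ∀ (W : List (X × Bool)) (u : FreeGroup X),
      (∀ s ∈ W, ∀ u, |φ (u * FreeGroup.mk [s]) - φ u| ≤ L) →
      φ u ≤ K + L → -K ≤ φ (u * FreeGroup.mk W) →
      ∃ P, P <+: W ∧ |φ (u * FreeGroup.mk P)| ≤ K + L := by
  intro W
  induction W with
  | nil =>
    intro u _ h1 h2
    refine ⟨[], List.prefix_rfl, ?_⟩
    rw [← FreeGroup.one_eq_mk, mul_one] at *
    rw [abs_le]; constructor <;> linarith
  | cons s W ih =>
    intro u hs h1 h2
    by_cases h : -K ≤ φ u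
    · refine ⟨[], (by simp), ?_⟩
      rw [← FreeGroup.one_eq_mk, mul_one]
      rw [abs_le]; constructor <;> linarith
    · have hmk : ∀ V : List (X × Bool), u * FreeGroup.mk (s :: V)
          = u * FreeGroup.mk [s] * FreeGroup.mk V := by
        intro V
        rw [mul_assoc, FreeGroup.mul_mk]; rfl
      have h3 := (abs_le.1 (hs s (by simp) u)).2
      obtain ⟨P, hP, hP'⟩ := ih (u * FreeGroup.mk [s]) (fun t ht => hs t (by simp [ht]))
        (by linarith) (by rw [← hmk]; exact h2)
      refine ⟨s :: P, ?_, ?_⟩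
      · exact List.cons_prefix_cons.2 ⟨rfl, hP⟩
      · rw [hmk]; exact hP'

/-- Shadow of a path of `G` in the free group. -/
theorem shadow {G X : Type*} [Group G] (A : Set G) (ℓ : G → ℕ)
    (hmul : ∀ g h, ℓ (g * h) ≤ ℓ g + ℓ h)
    (j : FreeGroup X →* G) (ρ : G → FreeGroup X) (K L : ℕ)
    (hK : ∀ x, ℓ ((j (ρ x))⁻¹ * x) ≤ K)
    (w : G → G → List (X × Bool))
    (hw : ∀ x, ∀ a ∈ A, ρ x * FreeGroup.mk (w x a) = ρ (x * a))
    (hL : ∀ x, ∀ a ∈ A, ∀ P, P <+: w x a → ℓ ((j (FreeGroup.mk P))⁻¹) ≤ L)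
    (hs : ∀ x, ∀ a ∈ A, ∀ s ∈ w x a, ℓ (j (FreeGroup.mk [s])) ≤ L) :
    ∀ (l : List G) (x : G), (∀ a ∈ l, a ∈ A) →
      ∃ W : List (X × Bool), ρ x * FreeGroup.mk W = ρ (x * l.prod) ∧
        (∀ s ∈ W, ℓ (j (FreeGroup.mk [s])) ≤ L) ∧
        ∀ P, P <+: W → ∃ l', l' <+: l ∧
          ℓ ((j (ρ x * FreeGroup.mk P))⁻¹ * (x * l'.prod)) ≤ L + K := by
  intro l
  induction l with
  | nil =>
    intro x _
    refine ⟨[], by simp [← FreeGroup.one_eq_mk], by simp, ?_⟩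
    intro P hP
    rw [List.prefix_nil] at hP
    subst hP
    refine ⟨[], List.prefix_rfl, ?_⟩
    have := hK x
    simp only [← FreeGroup.one_eq_mk, mul_one, List.prod_nil]
    omega
  | cons a l ih =>
    intro x hl
    have ha : a ∈ A := hl a (by simp)
    obtain ⟨W, h1, h2, h3⟩ := ih (x * a) (fun b hb => hl b (by simp [hb]))
    refine ⟨w x a ++ W, ?_, ?_, ?_⟩
    · rw [← FreeGroup.mul_mk, ← mul_assoc, hw x a ha, h1, List.prod_cons, mul_assoc]
    · intro s hs'
      rcases List.mem_append.1 hs' with h | h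
      · exact hs x a ha s h
      · exact h2 s h
    · intro P hP
      rw [initial_append_iff] at hP
      rcases hP with hP | ⟨t, rfl, ht⟩
      · refine ⟨[], (by simp), ?_⟩
        have e : (j (ρ x * FreeGroup.mk P))⁻¹ * (x * ([] : List G).prod)
            = (j (FreeGroup.mk P))⁻¹ * ((j (ρ x))⁻¹ * x) := by
          rw [map_mul]; simp [mul_assoc]
        rw [e]
        have := hmul ((j (FreeGroup.mk P))⁻¹) ((j (ρ x))⁻¹ * x)
        have := hK x
        have := hL x a ha P hP
        omega
      · obtain ⟨l', hl', h4⟩ := h3 t ht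
        refine ⟨a :: l', List.cons_prefix_cons.2 ⟨rfl, hl'⟩, ?_⟩
        rw [← FreeGroup.mul_mk, ← mul_assoc (ρ x), hw x a ha, List.prod_cons, ← mul_assoc x]
        exact h4

/-- The bottleneck property. -/
theorem bottleneck {G X : Type*} [Group G] (A : Set G) (ℓ : G → ℕ)
    (hinv : ∀ g, ℓ g⁻¹ = ℓ g)
    (hmul : ∀ g h, ℓ (g * h) ≤ ℓ g + ℓ h)
    (hgeo : ∀ g, ∃ l : List G, (∀ a ∈ l, a ∈ A) ∧ l.prod = g ∧ l.length = ℓ g)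
    (j : FreeGroup X →* G) (ρ : G → FreeGroup X) (K L : ℕ)
    (hK : ∀ x, ℓ ((j (ρ x))⁻¹ * x) ≤ K)
    (w : G → G → List (X × Bool))
    (hw : ∀ x, ∀ a ∈ A, ρ x * FreeGroup.mk (w x a) = ρ (x * a))
    (hL : ∀ x, ∀ a ∈ A, ∀ P, P <+: w x a → ℓ ((j (FreeGroup.mk P))⁻¹) ≤ L)
    (hs : ∀ x, ∀ a ∈ A, ∀ s ∈ w x a, ℓ (j (FreeGroup.mk [s])) ≤ L) (x y : G) :
    ∃ m : G, |(ℓ (m⁻¹ * x) : ℤ) - ℓ (m⁻¹ * y)| ≤ K + 2 * L ∧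
      ∀ l : List G, (∀ a ∈ l, a ∈ A) → x * l.prod = y →
        ∃ l', l' <+: l ∧ ℓ (m⁻¹ * (x * l'.prod)) ≤ L + K := by
  classical
  have sh := shadow A ℓ hmul j ρ K L hK w hw hL hs
  obtain ⟨l₀, hl₀, hp₀, -⟩ := hgeo (x⁻¹ * y)
  obtain ⟨W, hW1, hW2, -⟩ := sh l₀ x hl₀
  rw [hp₀, mul_inv_cancel_left] at hW1
  have hred : FreeGroup.Red W (FreeGroup.reduce W) := FreeGroup.reduce.red
  let φ : FreeGroup X → ℤ := fun u => (ℓ ((j u)⁻¹ * x) : ℤ) - ℓ ((j u)⁻¹ * y)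
  have hstep : ∀ s ∈ FreeGroup.reduce W, ∀ u,
      |φ (u * FreeGroup.mk [s]) - φ u| ≤ (2 * L : ℤ) := by
    intro s hs' u
    have hsl := hW2 s (hred.sublist.subset hs')
    set t := j (FreeGroup.mk [s]) with ht
    have key : ∀ z : G, |(ℓ ((j (u * FreeGroup.mk [s]))⁻¹ * z) : ℤ) - ℓ ((j u)⁻¹ * z)| ≤ L := by
      intro z
      have e1 : (j (u * FreeGroup.mk [s]))⁻¹ * z = t⁻¹ * ((j u)⁻¹ * z) := by
        rw [map_mul, ← ht]; group
      have e2 : (j u)⁻¹ * z = t * ((j (u * FreeGroup.mk [s]))⁻¹ * z) := by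
        rw [e1]; group
      have h1 := hmul t⁻¹ ((j u)⁻¹ * z)
      have h2 := hmul t ((j (u * FreeGroup.mk [s]))⁻¹ * z)
      rw [← e1, hinv] at h1
      rw [← e2] at h2
      rw [abs_le]; constructor <;> omega
    have kx := abs_le.1 (key x)
    have ky := abs_le.1 (key y)
    simp only [φ]
    rw [abs_le]; constructor <;> linarith [kx.1, kx.2, ky.1, ky.2]
  obtain ⟨P, hP, hP'⟩ := discrete_ivt φ K (2 * L) (by positivity) (by positivity)
    (FreeGroup.reduce W) (ρ x) hstep (by
      have := hK x
      simp only [φ]; omega) (by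
      have : FreeGroup.mk (FreeGroup.reduce W) = FreeGroup.mk W := FreeGroup.reduce.self
      rw [this, hW1]
      have := hK y
      simp only [φ]; omega)
  refine ⟨j (ρ x * FreeGroup.mk P), hP', ?_⟩
  intro l hl hxy
  obtain ⟨V, hV1, -, hV3⟩ := sh l x hl
  rw [hxy, ← hW1] at hV1
  have hVW : FreeGroup.reduce V = FreeGroup.reduce W :=
    FreeGroup.reduce.sound (mul_left_cancel hV1)
  obtain ⟨Q, hQ, hQP⟩ := prefix_of_reduction (FreeGroup.reduce.red (L := V)) P (by rw [hVW]; exact hP)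
  obtain ⟨l', hl', h⟩ := hV3 Q hQ
  rw [hQP] at h
  exact ⟨l', hl', h⟩

/-- Every finite subgroup is conjugate into a fixed finite set. -/
theorem finite_conj (G : Type*) [Group G] (hfg : Group.FG G) (hvf : VirtuallyFree G) :
    ∃ B : Set G, B.Finite ∧ ∀ H : Subgroup G, (H : Set G).Finite →
      ∃ g : G, ∀ h ∈ H, g * h * g⁻¹ ∈ B := by
  classical
  obtain ⟨A, ℓ, hA, h1, hinv, hmul, hball, hle, hgeo⟩ := exists_length G hfg
  obtain ⟨F, hF, ⟨hfree⟩⟩ := hvf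
  let e : F ≃* FreeGroup (IsFreeGroup.Generators F) := IsFreeGroup.toFreeGroup F
  let j : FreeGroup (IsFreeGroup.Generators F) →* G := F.subtype.comp e.symm.toMonoidHom
  -- right coset representatives
  let q : G → Quotient (QuotientGroup.rightRel F) := fun x => Quotient.mk _ x
  haveI : Finite (Quotient (QuotientGroup.rightRel F)) :=
    Finite.of_equiv _ (QuotientGroup.quotientRightRelEquivQuotientLeftRel F).symm
  let c : G → G := fun x => (q x).out
  have hc : ∀ x, x * (c x)⁻¹ ∈ F := by
    intro x
    have : (QuotientGroup.rightRel F) (c x) x := Quotient.mk_out (s := QuotientGroup.rightRel F) x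
    exact QuotientGroup.rightRel_apply.1 this
  have hcfin : (Set.range c).Finite := by
    refine (Set.finite_range (fun z : Quotient (QuotientGroup.rightRel F) => z.out)).subset ?_
    rintro _ ⟨x, rfl⟩
    exact ⟨q x, rfl⟩
  let ρ : G → FreeGroup (IsFreeGroup.Generators F) := fun x => e ⟨x * (c x)⁻¹, hc x⟩
  have hjρ : ∀ x, j (ρ x) = x * (c x)⁻¹ := by intro x; simp [j, ρ]
  have hjinj : Function.Injective j :=
    F.subtype_injective.comp e.symm.injective
  obtain ⟨K, hK⟩ : ∃ K, ∀ x, ℓ ((j (ρ x))⁻¹ * x) ≤ K := by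
    obtain ⟨K, hK⟩ := (hcfin.image ℓ).bddAbove
    refine ⟨K, fun x => ?_⟩
    rw [hjρ]
    have : (x * (c x)⁻¹)⁻¹ * x = c x := by group
    rw [this]
    exact hK ⟨c x, ⟨x, rfl⟩, rfl⟩
  let w : G → G → List (IsFreeGroup.Generators F × Bool) :=
    fun x a => ((ρ x)⁻¹ * ρ (x * a)).toWord
  have hw : ∀ x, ∀ a ∈ A, ρ x * FreeGroup.mk (w x a) = ρ (x * a) := by
    intro x a _
    simp only [w, FreeGroup.mk_toWord, mul_inv_cancel_left]
  let N : Set (List (IsFreeGroup.Generators F × Bool)) := {v | ∃ x, ∃ a ∈ A, v = w x a}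
  have hN : N.Finite := by
    have hM : (j ⁻¹' (Set.range c * A * (Set.range c)⁻¹)).Finite :=
      ((hcfin.mul hA).mul hcfin.inv).preimage hjinj.injOn
    refine (hM.image FreeGroup.toWord).subset ?_
    rintro _ ⟨x, a, ha, rfl⟩
    refine ⟨(ρ x)⁻¹ * ρ (x * a), ?_, rfl⟩
    have : j ((ρ x)⁻¹ * ρ (x * a)) = c x * a * (c (x * a))⁻¹ := by
      rw [map_mul, map_inv, hjρ, hjρ]; group
    rw [Set.mem_preimage, this]
    exact Set.mul_mem_mul (Set.mul_mem_mul ⟨x, rfl⟩ ha) (Set.inv_mem_inv.2 ⟨_, rfl⟩)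
  obtain ⟨L₁, hL₁⟩ : ∃ L, ∀ x, ∀ a ∈ A, ∀ P, P <+: w x a → ℓ ((j (FreeGroup.mk P))⁻¹) ≤ L := by
    have : (⋃ v ∈ N, {P | P ∈ v.inits}).Finite :=
      hN.biUnion (fun v _ => List.finite_toSet _)
    obtain ⟨L, hL⟩ := (this.image (fun P => ℓ ((j (FreeGroup.mk P))⁻¹))).bddAbove
    refine ⟨L, fun x a ha P hP => hL ⟨P, ?_, rfl⟩⟩
    simp only [Set.mem_iUnion]
    exact ⟨w x a, ⟨x, a, ha, rfl⟩, (List.mem_inits _ _).2 hP⟩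
  obtain ⟨L₂, hL₂⟩ : ∃ L, ∀ x, ∀ a ∈ A, ∀ s ∈ w x a, ℓ (j (FreeGroup.mk [s])) ≤ L := by
    have : (⋃ v ∈ N, {s | s ∈ v}).Finite :=
      hN.biUnion (fun v _ => List.finite_toSet _)
    obtain ⟨L, hL⟩ := (this.image (fun s => ℓ (j (FreeGroup.mk [s])))).bddAbove
    refine ⟨L, fun x a ha s hs => hL ⟨s, ?_, rfl⟩⟩
    simp only [Set.mem_iUnion]
    exact ⟨w x a, ⟨x, a, ha, rfl⟩, hs⟩
  obtain ⟨Δ, C, hb⟩ : ∃ Δ C : ℕ, ∀ x y : G, ∃ m : G,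
      |(ℓ (m⁻¹ * x) : ℤ) - ℓ (m⁻¹ * y)| ≤ C ∧
      ∀ l : List G, (∀ a ∈ l, a ∈ A) → x * l.prod = y →
        ∃ l', l' <+: l ∧ ℓ (m⁻¹ * (x * l'.prod)) ≤ Δ := by
    refine ⟨max L₁ L₂ + K, K + 2 * max L₁ L₂, fun x y => ?_⟩
    have := bottleneck A ℓ hinv hmul hgeo j ρ K (max L₁ L₂) hK w hw
      (fun x a ha P hP => (hL₁ x a ha P hP).trans (le_max_left _ _))
      (fun x a ha s hs => (hL₂ x a ha s hs).trans (le_max_right _ _)) x y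
    exact_mod_cast this
  clear hL₁ hL₂ hN
  refine ⟨{g | ℓ g ≤ 4 * Δ + C}, hball _, ?_⟩
  intro H hH
  let T : Finset G := hH.toFinset
  have hT : ∀ z, z ∈ T ↔ z ∈ H := by intro z; simp [T]
  have hTne : T.Nonempty := ⟨1, (hT 1).2 H.one_mem⟩
  let r : G → ℕ := fun f => T.sup (fun z => ℓ (f⁻¹ * z))
  obtain ⟨f, hf⟩ : ∃ f, ∀ m, r f ≤ r m :=
    ⟨Function.argmin r, fun m => Function.argmin_le r m⟩
  have hr : ∀ z ∈ H, ℓ (f⁻¹ * z) ≤ r f := fun z hz =>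
    Finset.le_sup (f := fun z => ℓ (f⁻¹ * z)) ((hT z).2 hz)
  refine ⟨f⁻¹, fun h hh => ?_⟩
  rw [inv_inv]
  obtain ⟨m, hm, hpath⟩ := hb f (h * f)
  obtain ⟨z, hzT, hz⟩ := Finset.exists_mem_eq_sup T hTne (fun z => ℓ (m⁻¹ * z))
  have hzH := (hT z).1 hzT
  have hrm : r f ≤ ℓ (m⁻¹ * z) := (hf m).trans hz.le
  have hz1 := hr z hzH
  have hz2 : ℓ (z⁻¹ * (h * f)) ≤ r f := by
    have := hr (h⁻¹ * z) (H.mul_mem (H.inv_mem hh) hzH)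
    rw [← hinv]
    have e : (z⁻¹ * (h * f))⁻¹ = f⁻¹ * (h⁻¹ * z) := by group
    rwa [e]
  obtain ⟨l₁, hl₁, hp₁, hn₁⟩ := hgeo (f⁻¹ * z)
  obtain ⟨l₂, hl₂, hp₂, hn₂⟩ := hgeo (z⁻¹ * (h * f))
  obtain ⟨l', hl', hd⟩ := hpath (l₁ ++ l₂) (by
      intro a ha
      rcases List.mem_append.1 ha with h | h
      · exact hl₁ a h
      · exact hl₂ a h) (by rw [List.prod_append, hp₁, hp₂]; group)
  have hm' := abs_le.1 hm
  have hfin : ℓ (m⁻¹ * f) ≤ 2 * Δ ∨ ℓ (m⁻¹ * (h * f)) ≤ 2 * Δ := by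
    rw [initial_append_iff] at hl'
    rcases hl' with ⟨t, ht⟩ | ⟨t, rfl, s, hs⟩
    · left
      subst ht
      have a1 := hle l' (fun a ha => hl₁ a (by simp [ha]))
      have a2 := hle t (fun a ha => hl₁ a (by simp [ha]))
      have b1 := hmul (m⁻¹ * (f * l'.prod)) t.prod
      have b2 := hmul (m⁻¹ * (f * l'.prod)) (l'.prod)⁻¹
      rw [hinv] at b2
      have e1 : m⁻¹ * (f * l'.prod) * t.prod = m⁻¹ * z := by
        rw [List.prod_append] at hp₁
        rw [mul_assoc, mul_assoc, hp₁]; group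
      have e2 : m⁻¹ * (f * l'.prod) * (l'.prod)⁻¹ = m⁻¹ * f := by group
      rw [e1] at b1
      rw [e2] at b2
      rw [List.length_append] at hn₁
      omega
    · right
      subst hs
      have a1 := hle t (fun a ha => hl₂ a (by simp [ha]))
      have a2 := hle s (fun a ha => hl₂ a (by simp [ha]))
      rw [List.prod_append, hp₁] at hd
      have b1 := hmul (m⁻¹ * (f * (f⁻¹ * z * t.prod))) (t.prod)⁻¹
      have b2 := hmul (m⁻¹ * (f * (f⁻¹ * z * t.prod))) s.prod
      rw [hinv] at b1
      have e1 : m⁻¹ * (f * (f⁻¹ * z * t.prod)) * (t.prod)⁻¹ = m⁻¹ * z := by group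
      have e2 : m⁻¹ * (f * (f⁻¹ * z * t.prod)) * s.prod = m⁻¹ * (h * f) := by
        rw [List.prod_append] at hp₂
        have : m⁻¹ * (f * (f⁻¹ * z * t.prod)) * s.prod = m⁻¹ * (z * (t.prod * s.prod)) := by group
        rw [this, hp₂]; group
      rw [e1] at b1
      rw [e2] at b2
      rw [List.length_append] at hn₂
      omega
  show ℓ (f⁻¹ * h * f) ≤ 4 * Δ + C
  have b := hmul (m⁻¹ * f)⁻¹ (m⁻¹ * (h * f))
  rw [hinv] at b
  have e1 : (m⁻¹ * f)⁻¹ * (m⁻¹ * (h * f)) = f⁻¹ * h * f := by group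
  rw [e1] at b
  omega

/-- The subgroup of automorphisms equivalent to the identity. -/
def aut0 (G : Type*) [Group G] : Subgroup (MulAut G) where
  carrier := {σ | HomEquiv σ.toMonoidHom (MonoidHom.id G)}
  one_mem' := fun H _ => ⟨1, fun h _ => by simp⟩
  mul_mem' := by
    intro σ τ hσ hτ H hH
    obtain ⟨g, hg⟩ := hτ H hH
    obtain ⟨k, hk⟩ := hσ H hH
    refine ⟨k * σ g, fun h hh => ?_⟩
    have h1 : h = g * τ h * g⁻¹ := hg h hh
    have h2 : h = k * σ h * k⁻¹ := hk h hh
    show h = k * σ g * σ (τ h) * (k * σ g)⁻¹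
    have h3 : σ h = σ g * σ (τ h) * (σ g)⁻¹ := by
      conv_lhs => rw [h1]
      simp
    rw [h3] at h2
    conv_lhs => rw [h2]
    group
  inv_mem' := by
    intro σ hσ H hH
    obtain ⟨g, hg⟩ := hσ H hH
    refine ⟨(σ⁻¹ g)⁻¹, fun h hh => ?_⟩
    have h1 : h = g * σ h * g⁻¹ := hg h hh
    show h = (σ⁻¹ g)⁻¹ * σ⁻¹ h * (σ⁻¹ g)⁻¹⁻¹
    have h3 : σ⁻¹ h = σ⁻¹ g * h * (σ⁻¹ g)⁻¹ := by
      conv_lhs => rw [h1]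
      simp
    rw [h3]
    group

theorem aut0_finiteIndex (G : Type*) [Group G] (hfg : Group.FG G) (hvf : VirtuallyFree G) :
    (aut0 G).FiniteIndex := by
  classical
  obtain ⟨B, hB, hconj⟩ := finite_conj G hfg hvf
  haveI : Finite B := hB
  let Y := {H : Subgroup G // (H : Set G) ⊆ B}
  have hYfin : ∀ H : Y, (H.1 : Set G).Finite := fun H => hB.subset H.2
  haveI : Finite Y := by
    refine Finite.of_injective (fun H : Y => {b : B | (b : G) ∈ H.1}) ?_
    intro H K hHK
    apply Subtype.ext
    ext x
    constructor
    · intro hx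
      have : (⟨x, H.2 hx⟩ : B) ∈ {b : B | (b : G) ∈ H.1} := hx
      rw [show {b : B | (b : G) ∈ H.1} = {b : B | (b : G) ∈ K.1} from hHK] at this
      exact this
    · intro hx
      have : (⟨x, K.2 hx⟩ : B) ∈ {b : B | (b : G) ∈ K.1} := hx
      rw [← show {b : B | (b : G) ∈ H.1} = {b : B | (b : G) ∈ K.1} from hHK] at this
      exact this
  have hch : ∀ (σ : MulAut G) (H : Y), ∃ g : G, ∀ h ∈ H.1, g * σ h * g⁻¹ ∈ B := by
    intro σ H
    obtain ⟨g, hg⟩ := hconj (H.1.map σ.toMonoidHom) (by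
      rw [Subgroup.coe_map]; exact (hYfin H).image _)
    exact ⟨g, fun h hh => hg (σ h) ⟨h, hh, rfl⟩⟩
  choose g hg using hch
  let R : MulAut G → Y → Set (B × B) := fun σ H =>
    {p | g σ H * σ p.1 * (g σ H)⁻¹ = p.2}
  have key : ∀ σ τ : MulAut G, R σ = R τ → σ⁻¹ * τ ∈ aut0 G := by
    intro σ τ hR H hH
    obtain ⟨u, hu⟩ := hconj H hH
    let K : Y := ⟨H.map (MulAut.conj u).toMonoidHom, by
      rintro _ ⟨h, hh, rfl⟩
      exact hu h hh⟩
    have hK : ∀ h ∈ H, u * h * u⁻¹ ∈ K.1 := fun h hh => ⟨h, hh, rfl⟩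
    have hst : ∀ k ∈ K.1, g τ K * τ k * (g τ K)⁻¹ = g σ K * σ k * (g σ K)⁻¹ := by
      intro k hk
      have hmem : ((⟨k, K.2 hk⟩, ⟨_, hg σ K k hk⟩) : B × B) ∈ R σ K := rfl
      rw [hR] at hmem
      exact hmem
    -- `x` conjugates `τ k` to `σ k`
    set x := (g σ K)⁻¹ * g τ K with hx
    have hst' : ∀ k ∈ K.1, x * τ k * x⁻¹ = σ k := by
      intro k hk
      have : x * τ k * x⁻¹ = (g σ K)⁻¹ * (g τ K * τ k * (g τ K)⁻¹) * g σ K := by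
        rw [hx]; group
      rw [this, hst k hk]; group
    refine ⟨u⁻¹ * σ⁻¹ x * σ⁻¹ (τ u), fun h hh => ?_⟩
    show h = u⁻¹ * σ⁻¹ x * σ⁻¹ (τ u) * σ⁻¹ (τ h) * (u⁻¹ * σ⁻¹ x * σ⁻¹ (τ u))⁻¹
    have h1 := congrArg (fun y => σ⁻¹ y) (hst' _ (hK h hh))
    simp only [map_mul, map_inv, MulAut.inv_apply_self] at h1
    have h2 : h = u⁻¹ * (u * h * u⁻¹) * u := by group
    conv_lhs => rw [h2, ← h1]
    group
  haveI : Finite (MulAut G ⧸ aut0 G) := by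
    refine Finite.of_injective (fun q : MulAut G ⧸ aut0 G => R q.out) ?_
    intro a b hab
    have := key _ _ hab
    rw [← QuotientGroup.eq] at this
    simpa using this
  exact Subgroup.finiteIndex_of_finite_quotient

end Aut0

/-- In a finitely generated virtually free group, the automorphisms equivalent
to the identity form a finite index subgroup of the automorphism group. -/
theorem aut0_finiteIndex_subgroup
    (G : Type*) [Group G] (hfg : Group.FG G) (hvf : VirtuallyFree G) :
    ∃ S : Subgroup (MulAut G),
      (∀ σ : MulAut G, σ ∈ S ↔ HomEquiv σ.toMonoidHom (MonoidHom.id G)) ∧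
        S.FiniteIndex := by
  exact ⟨Aut0.aut0 G, fun _ => Iff.rfl, Aut0.aut0_finiteIndex G hfg hvf⟩
end
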